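/- Let I ⊆ ℝ be a nondegenerate interval, n ≥ 2, let ω be an n-dimensional positive Chebyshev system over I, and let (t_1,…,t_n) ∈ ℝ₊ⁿ; set t_{n+1} := t_1. If, for all pairs (k,i) ∈ {1,…,n−1} × {1,…,n}, the function f : I → ℝ is ((t_i𝟏_k, t_{i+1}𝟏_{n−k}), ω)-convex on I, then f is cyclically ((t_1,…,t_n), ω)-convex on I. -/

import Mathlib

/-- `Phi ω x` is the determinant `det(ωᵢ(xⱼ))` of an `n`-tuple of functions
evaluated at an `n`-tuple of points. -/
noncomputable def Phi {n : ℕ} (ω : Fin n → ℝ → ℝ) (x : Fin n → ℝ) : ℝ :=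
  (Matrix.of fun i j => ω i (x j)).det

/-- `ω` is an `n`-dimensional positive Chebyshev system over `H`:
`Phi ω` is positive on all strictly increasing `n`-tuples of elements of `H`. -/
def IsPosChebyshev {n : ℕ} (ω : Fin n → ℝ → ℝ) (H : Set ℝ) : Prop :=
  ∀ x : Fin n → ℝ, StrictMono x → (∀ j, x j ∈ H) → 0 < Phi ω x

/-- The partial sum `t₁ + ⋯ + tⱼ` (empty for `j = 0`, everything for `j = n`). -/
noncomputable def psum {n : ℕ} (t : Fin n → ℝ) (j : Fin (n + 1)) : ℝ :=
  ∑ i ∈ Finset.univ.filter (fun i : Fin n => (i : ℕ) < (j : ℕ)), t i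

/-- `f` is `(t,ω)`-convex on `J`:
`Φ_{(ω,f)}(x, x+t₁h, x+(t₁+t₂)h, …, x+(t₁+⋯+tₙ)h) ≥ 0`
for all `x ∈ J` and `h > 0` with `x+(t₁+⋯+tₙ)h ∈ J`. -/
def TOmegaConvexOn {n : ℕ} (ω : Fin n → ℝ → ℝ) (t : Fin n → ℝ) (J : Set ℝ) (f : ℝ → ℝ) : Prop :=
  ∀ x ∈ J, ∀ h : ℝ, 0 < h → x + psum t (Fin.last n) * h ∈ J →
    0 ≤ Phi (Fin.snoc ω f) (fun j => x + psum t j * h)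


open Finset in
theorem Phi_snoc_expand {n : ℕ} (ω : Fin n → ℝ → ℝ) (f : ℝ → ℝ) (x : Fin (n + 1) → ℝ) :
    Phi (Fin.snoc ω f : Fin (n + 1) → ℝ → ℝ) x
      = ∑ j : Fin (n + 1), (-1) ^ (n + (j : ℕ)) * f (x j) * Phi ω (x ∘ j.succAbove) := by
  unfold Phi
  rw [Matrix.det_succ_row _ (Fin.last n)]
  refine Finset.sum_congr rfl fun j _ => ?_
  have h : (Matrix.of fun i j => (Fin.snoc ω f : Fin (n + 1) → ℝ → ℝ) i (x j)).submatrix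
      (Fin.last n).succAbove j.succAbove
      = Matrix.of fun i k => ω i ((x ∘ j.succAbove) k) := by
    ext i k
    simp [Fin.succAbove_last]
  rw [h]
  simp

theorem Phi_snoc_self {n : ℕ} (ω : Fin n → ℝ → ℝ) (i : Fin n) (x : Fin (n + 1) → ℝ) :
    Phi (Fin.snoc ω (ω i) : Fin (n + 1) → ℝ → ℝ) x = 0 := by
  unfold Phi
  refine Matrix.det_zero_of_row_eq (i := i.castSucc) (j := Fin.last n) (Fin.castSucc_lt_last i).ne ?_
  ext k
  simp

theorem Phi_snoc_sub {n : ℕ} (ω : Fin n → ℝ → ℝ) (f : ℝ → ℝ) (c : Fin n → ℝ)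
    (x : Fin (n + 1) → ℝ) :
    Phi (Fin.snoc ω (fun z => f z - ∑ i, c i * ω i z) : Fin (n + 1) → ℝ → ℝ) x
      = Phi (Fin.snoc ω f : Fin (n + 1) → ℝ → ℝ) x := by
  have h0 : ∑ i, c i * Phi (Fin.snoc ω (ω i) : Fin (n + 1) → ℝ → ℝ) x = 0 := by
    simp [Phi_snoc_self]
  rw [← sub_zero (Phi (Fin.snoc ω f : Fin (n + 1) → ℝ → ℝ) x), ← h0]
  simp only [Phi_snoc_expand, Finset.mul_sum]
  rw [Finset.sum_comm, ← Finset.sum_sub_distrib]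
  refine Finset.sum_congr rfl fun j _ => ?_
  rw [mul_sub, sub_mul, Finset.mul_sum, Finset.sum_mul]
  congr 1
  refine Finset.sum_congr rfl fun i _ => ?_
  ring

theorem exists_interp {n : ℕ} (ω : Fin n → ℝ → ℝ) (f : ℝ → ℝ) (y : Fin n → ℝ)
    (h : Phi ω y ≠ 0) : ∃ c : Fin n → ℝ, ∀ k, f (y k) - ∑ i, c i * ω i (y k) = 0 := by
  let A : Matrix (Fin n) (Fin n) ℝ := Matrix.of fun i j => ω i (y j)
  have hA : IsUnit A.det := isUnit_iff_ne_zero.mpr h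
  refine ⟨Matrix.vecMul (fun k => f (y k)) A⁻¹, fun k => ?_⟩
  have h1 : Matrix.vecMul (Matrix.vecMul (fun k => f (y k)) A⁻¹) A = fun k => f (y k) := by
    rw [Matrix.vecMul_vecMul, Matrix.nonsing_inv_mul A hA, Matrix.vecMul_one]
  have h2 := congrFun h1 k
  rw [sub_eq_zero, ← h2]
  rfl

/-- Removing an interior point from `n+2` points. -/
theorem Phi_interior {n : ℕ} (ω : Fin n → ℝ → ℝ) (I : Set ℝ) (hω : IsPosChebyshev ω I)
    (f : ℝ → ℝ) (x : Fin (n + 2) → ℝ) (hx : StrictMono x) (hxI : ∀ j, x j ∈ I)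
    (j : Fin (n + 2)) (hj0 : j ≠ 0) (hjl : j ≠ Fin.last (n + 1))
    (h0 : 0 ≤ Phi (Fin.snoc ω f : Fin (n + 1) → ℝ → ℝ) (x ∘ Fin.succ))
    (hl : 0 ≤ Phi (Fin.snoc ω f : Fin (n + 1) → ℝ → ℝ) (x ∘ Fin.castSucc)) :
    0 ≤ Phi (Fin.snoc ω f : Fin (n + 1) → ℝ → ℝ) (x ∘ j.succAbove) := by
  have hpos : ∀ p : Fin n → Fin (n + 2), StrictMono p → 0 < Phi ω (x ∘ p) := fun p hp =>
    hω _ (hx.comp hp) (fun _ => hxI _)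
  obtain ⟨c, hc⟩ := exists_interp ω f (x ∘ (Fin.succ ∘ Fin.castSucc))
    (hpos _ ((Fin.strictMono_succ).comp Fin.strictMono_castSucc)).ne'
  rw [← Phi_snoc_sub ω f c] at h0 hl ⊢
  set g : ℝ → ℝ := fun z => f z - ∑ i, c i * ω i z with hg
  have hgz : ∀ k : Fin (n + 2), k ≠ 0 → k ≠ Fin.last (n + 1) → g (x k) = 0 := by
    intro k hk0 hkl
    obtain ⟨k', rfl⟩ := Fin.exists_succ_eq.mpr hk0
    have : k' ≠ Fin.last n := by rintro rfl; exact hkl (Fin.succ_last n)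
    obtain ⟨k'', rfl⟩ := Fin.exists_castSucc_eq.mpr this
    exact hc k''
  rw [Phi_snoc_expand] at h0 hl ⊢
  have hgl : 0 ≤ g (x (Fin.last (n + 1))) := by
    rw [Finset.sum_eq_single (Fin.last n)] at h0
    · have hp := hpos (Fin.succ ∘ (Fin.last n).succAbove)
        ((Fin.strictMono_succ).comp (Fin.strictMono_succAbove _))
      have e : ((-1 : ℝ)) ^ (n + ((Fin.last n : Fin (n + 1)) : ℕ)) = 1 :=
        Even.neg_one_pow ⟨n, by simp⟩
      rw [e, one_mul] at h0
      exact nonneg_of_mul_nonneg_left h0 hp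
    · intro b _ hb
      have : g ((x ∘ Fin.succ) b) = 0 := hgz _ (Fin.succ_ne_zero b) (by
        intro h; apply hb; apply Fin.succ_injective; rw [h, Fin.succ_last])
      rw [this]; ring
    · simp
  have hg0 : 0 ≤ (-1) ^ n * g (x 0) := by
    rw [Finset.sum_eq_single 0] at hl
    · have hp := hpos (Fin.castSucc ∘ (0 : Fin (n + 1)).succAbove)
        ((Fin.strictMono_castSucc).comp (Fin.strictMono_succAbove _))
      have := nonneg_of_mul_nonneg_left hl hp
      simpa using this
    · intro b _ hb
      have : g ((x ∘ Fin.castSucc) b) = 0 := hgz _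
        (by intro h; apply hb; apply Fin.castSucc_injective; rw [h]; rfl)
        (Fin.castSucc_lt_last b).ne
      rw [this]; ring
    · simp
  refine Finset.sum_nonneg fun b _ => ?_
  have hp : 0 < Phi ω ((x ∘ j.succAbove) ∘ b.succAbove) :=
    hpos (j.succAbove ∘ b.succAbove)
      ((Fin.strictMono_succAbove _).comp (Fin.strictMono_succAbove _))
  refine mul_nonneg ?_ hp.le
  show 0 ≤ (-1) ^ (n + (b : ℕ)) * g (x (j.succAbove b))
  by_cases hb0 : b = 0
  · subst hb0
    rw [Fin.succAbove_ne_zero_zero hj0]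
    simpa using hg0
  by_cases hbl : b = Fin.last n
  · subst hbl
    rw [Fin.succAbove_ne_last_last hjl]
    have e : ((-1 : ℝ)) ^ (n + ((Fin.last n : Fin (n + 1)) : ℕ)) = 1 :=
      Even.neg_one_pow ⟨n, by simp⟩
    rw [e, one_mul]; exact hgl
  · rw [hgz _ (Fin.succAbove_ne_zero hj0 hb0) (Fin.succAbove_ne_last hjl hbl)]
    simp

theorem exists_insert {n : ℕ} (i : Fin (n + 1) → ℕ) (hi : StrictMono i)
    (m : ℕ) (hm : ∀ k, i k ≠ m) (h0 : i 0 < m) (hl : m < i (Fin.last n)) :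
    ∃ (p : Fin (n + 2) → ℕ) (j : Fin (n + 2)), StrictMono p ∧ p ∘ j.succAbove = i ∧
      j ≠ 0 ∧ j ≠ Fin.last (n + 1) := by
  classical
  let S : Finset ℕ := insert m (Finset.univ.image i)
  have hS : S.card = n + 2 := by
    rw [Finset.card_insert_of_notMem (by simpa using hm),
      Finset.card_image_of_injective _ hi.injective]
    simp
  let p := S.orderEmbOfFin hS
  have hr : Set.range p = S := Finset.range_orderEmbOfFin S hS
  have hmr : m ∈ Set.range p := by rw [hr]; simp [S]
  obtain ⟨j, hj⟩ := hmr
  have hir : ∀ k, ∃ b, p b = i k := fun k => by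
    have : i k ∈ Set.range p := by rw [hr]; simp [S]
    exact this
  have hcard : (Finset.univ.image i).card = n + 1 := by
    rw [Finset.card_image_of_injective _ hi.injective]; simp
  refine ⟨p, j, p.strictMono, ?_, ?_, ?_⟩
  · have e1 : p ∘ j.succAbove = (Finset.univ.image i).orderEmbOfFin hcard := by
      apply Finset.orderEmbOfFin_unique
      · intro b
        have : p (j.succAbove b) ∈ S := Finset.orderEmbOfFin_mem S hS _
        rcases Finset.mem_insert.mp this with h | h
        · exact absurd (p.injective (h.trans hj.symm)) (Fin.succAbove_ne j b)
        · exact h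
      · exact p.strictMono.comp (Fin.strictMono_succAbove j)
    have e2 : i = (Finset.univ.image i).orderEmbOfFin hcard := by
      apply Finset.orderEmbOfFin_unique
      · intro b; simp
      · exact hi
    rw [e1, ← e2]
  · rintro rfl
    obtain ⟨b, hb⟩ := hir 0
    have : p 0 ≤ p b := p.monotone (Fin.zero_le b)
    omega
  · rintro rfl
    obtain ⟨b, hb⟩ := hir (Fin.last n)
    have : p b ≤ p (Fin.last (n + 1)) := p.monotone (Fin.le_last b)
    omega

theorem consecutive_of_no_gap {n : ℕ} (i : Fin (n + 1) → ℕ) (hi : StrictMono i)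
    (h : ¬ ∃ m, (∀ k, i k ≠ m) ∧ i 0 < m ∧ m < i (Fin.last n)) (j : Fin (n + 1)) :
    i j = i 0 + j := by
  push Not at h
  induction j using Fin.induction with
  | zero => simp
  | succ b ih =>
    have h1 : i b.castSucc < i b.succ := hi Fin.castSucc_lt_succ
    by_contra hne
    have hb : ((b.castSucc : Fin (n + 1)) : ℕ) = b := rfl
    have hb' : ((b.succ : Fin (n + 1)) : ℕ) = b + 1 := rfl
    rw [hb] at ih
    rw [hb'] at hne
    have h3 : i b.succ ≤ i (Fin.last n) := hi.monotone (Fin.le_last _)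
    have hk : ∀ k, i k ≠ i 0 + b + 1 := by
      intro k hk
      rcases le_or_gt k b.castSucc with hc | hc
      · have := hi.monotone hc; omega
      · have := hi.monotone (Fin.castSucc_lt_iff_succ_le.mp hc); omega
    have := h _ hk (by omega)
    omega

theorem Phi_of_consecutive {n : ℕ} (ω : Fin n → ℝ → ℝ) (I : Set ℝ) (hω : IsPosChebyshev ω I)
    (f : ℝ → ℝ) (y : ℕ → ℝ) (hy : StrictMono y) (M : ℕ) (hyI : ∀ k ≤ M, y k ∈ I)
    (hcons : ∀ k, k + n ≤ M →
      0 ≤ Phi (Fin.snoc ω f : Fin (n + 1) → ℝ → ℝ) (fun j => y (k + (j : ℕ)))) :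
    ∀ (d : ℕ) (i : Fin (n + 1) → ℕ), StrictMono i → i (Fin.last n) ≤ M →
      i (Fin.last n) - i 0 = d →
      0 ≤ Phi (Fin.snoc ω f : Fin (n + 1) → ℝ → ℝ) (y ∘ i) := by
  intro d
  induction d using Nat.strong_induction_on with
  | _ d ih =>
  intro i hi hM hd
  by_cases hgap : ∃ m, (∀ k, i k ≠ m) ∧ i 0 < m ∧ m < i (Fin.last n)
  · obtain ⟨m, hm, h0, hl⟩ := hgap
    obtain ⟨p, j, hp, hpi, hj0, hjl⟩ := exists_insert i hi m hm h0 hl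
    have hp0 : p 0 = i 0 := by
      rw [← hpi]; simp [Fin.succAbove_ne_zero_zero hj0]
    have hpl : p (Fin.last (n + 1)) = i (Fin.last n) := by
      rw [← hpi]; simp [Fin.succAbove_ne_last_last hjl]
    have key := Phi_interior ω I hω f (y ∘ p) (hy.comp hp)
      (fun k => hyI _ ((hp.monotone (Fin.le_last k)).trans (hpl.le.trans hM))) j hj0 hjl
    have h01 : p 0 < p (Fin.succ 0) := hp (Fin.succ_pos 0)
    have hll : p (Fin.castSucc (Fin.last n)) < p (Fin.last (n + 1)) := hp (Fin.castSucc_lt_last _)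
    have h0l : p (Fin.succ 0) ≤ p (Fin.last (n + 1)) := hp.monotone (Fin.le_last _)
    have h0l' : p 0 ≤ p (Fin.castSucc (Fin.last n)) := hp.monotone (Fin.zero_le _)
    simp only [Function.comp_assoc, hpi] at key
    apply key
    · refine ih _ ?_ (p ∘ Fin.succ) (hp.comp Fin.strictMono_succ) ?_ rfl
      · simp only [Function.comp_apply, Fin.succ_last, Nat.succ_eq_add_one]
        omega
      · simp only [Function.comp_apply, Fin.succ_last, Nat.succ_eq_add_one]
        omega
    · refine ih _ ?_ (p ∘ Fin.castSucc) (hp.comp Fin.strictMono_castSucc) ?_ rfl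
      · simp only [Function.comp_apply, Fin.castSucc_zero]
        omega
      · simp only [Function.comp_apply]
        omega
  · have hc := consecutive_of_no_gap i hi hgap
    have e : y ∘ i = fun j : Fin (n + 1) => y (i 0 + (j : ℕ)) := by
      funext j; simp only [Function.comp_apply]; rw [hc j]
    rw [e]
    apply hcons
    have := hc (Fin.last n)
    simp only [Fin.val_last] at this
    omega

theorem psum_eq_range {n : ℕ} (T : Fin n → ℝ) (s : ℕ → ℝ) (h : ∀ l : Fin n, T l = s l)
    (j : Fin (n + 1)) : psum T j = ∑ l ∈ Finset.range j, s l := by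
  unfold psum
  rw [Finset.sum_filter]
  have e : ∀ l : Fin n, (if (l : ℕ) < (j : ℕ) then T l else 0)
      = (fun l : ℕ => if l < (j : ℕ) then s l else 0) l := fun l => by simp [h l]
  rw [Finset.sum_congr rfl fun l _ => e l, Fin.sum_univ_eq_sum_range
    (fun l : ℕ => if l < (j : ℕ) then s l else 0), ← Finset.sum_filter]
  congr 1
  ext l
  have := j.2
  simp only [Finset.mem_filter, Finset.mem_range]
  omega

theorem sum_blocks (N : ℕ) (hN : 0 < N) (u : ℕ → ℝ) (q : ℕ) :
    ∑ l ∈ Finset.range (N * q), u (l / N) = N * ∑ l ∈ Finset.range q, u l := by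
  induction q with
  | zero => simp
  | succ q ih =>
    rw [Nat.mul_succ, Finset.sum_range_add, ih, Finset.sum_range_succ, mul_add]
    congr 1
    rw [Finset.sum_congr rfl (g := fun _ => u q)]
    · simp
    · intro l hl
      rw [Nat.mul_add_div hN, Nat.div_eq_of_lt (Finset.mem_range.mp hl), add_zero]

/-- **Corollary 5⁺.** Let `n ≥ 2`, `(t₁,…,tₙ)` positive, and set `t_{n+1} := t₁`
(realized by the wrap-around addition of `Fin n`). If, for every `k ∈ {1,…,n−1}` and
every cyclically subsequent pair `(t_j, t_{j+1})` (`j ∈ Fin n`), the function `f` is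
`((t_j 𝟏_k, t_{j+1} 𝟏_{n−k}), ω)`-convex on `I`, then `f` is cyclically
`((t₁,…,tₙ), ω)`-convex on `I`. -/
theorem cyclically_tOmegaConvex_of_twoBlock_convexities
    (n : ℕ) (hn : 2 ≤ n) (I : Set ℝ) (hI : I.OrdConnected)
    (hne : ∃ a ∈ I, ∃ b ∈ I, a < b)
    (ω : Fin n → ℝ → ℝ) (hω : IsPosChebyshev ω I)
    (t : Fin n → ℝ) (ht : ∀ i, 0 < t i) (f : ℝ → ℝ)
    (hblocks : ∀ k : ℕ, 1 ≤ k → k < n → ∀ j : Fin n,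
      TOmegaConvexOn ω
        (fun m : Fin n => if (m : ℕ) < k then t j else t (j + ⟨1, by omega⟩)) I f) :
    ∀ c : Fin n, TOmegaConvexOn ω (fun i => t (i + c)) I f := by
  intro c x hx h hh hxl
  have hn0 : 0 < n := by omega
  obtain ⟨N, rfl⟩ : ∃ N, n = N + 1 := ⟨n - 1, by omega⟩
  have hN : 0 < N := by omega
  have hNR : (0 : ℝ) < N := by exact_mod_cast hN
  let u : ℕ → ℝ := fun q => t (⟨q % (N + 1), Nat.mod_lt _ hn0⟩ + c)
  have hu : ∀ q, 0 < u q := fun q => ht _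
  have husucc : ∀ q, u (q + 1) = t ((⟨q % (N + 1), Nat.mod_lt _ hn0⟩ + c) + ⟨1, by omega⟩) := by
    intro q
    show t _ = t _
    congr 1
    apply Fin.ext
    simp only [Fin.val_add, Nat.mod_add_mod]
    congr 1
    omega
  let y : ℕ → ℝ := fun k => x + (∑ l ∈ Finset.range k, u (l / N)) * (h / N)
  have hhN : 0 < h / N := div_pos hh hNR
  have hy : StrictMono y := by
    apply strictMono_nat_of_lt_succ
    intro k
    simp only [y, Finset.sum_range_succ]
    have := mul_pos (hu (k / N)) hhN
    linarith
  have hyN : ∀ j : Fin (N + 1 + 1), x + psum (fun i => t (i + c)) j * h = y (N * j) := by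
    intro j
    rw [psum_eq_range _ u (fun l => by
      show _ = t _
      congr 2
      apply Fin.ext
      exact (Nat.mod_eq_of_lt l.2).symm)]
    simp only [y]
    rw [sum_blocks N hN]
    field_simp
  have hy0 : y 0 = x := by simp [y]
  have hyI : ∀ k ≤ N * (N + 1), y k ∈ I := by
    intro k hk
    rw [hyN] at hxl
    refine hI.out hx hxl ⟨?_, ?_⟩
    · rw [← hy0]; exact hy.monotone (Nat.zero_le k)
    · exact hy.monotone (by simpa using hk)
  have hcons : ∀ k, k + (N + 1) ≤ N * (N + 1) →
      0 ≤ Phi (Fin.snoc ω f : Fin (N + 1 + 1) → ℝ → ℝ) (fun j => y (k + (j : ℕ))) := by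
    intro k hk
    have hr := Nat.mod_lt k hN
    have hdm := Nat.div_add_mod k N
    have key := hblocks (N - k % N) (by omega) (by omega)
      (⟨(k / N) % (N + 1), Nat.mod_lt _ hn0⟩ + c) (y k) (hyI k (by omega)) (h / N) hhN
    have hps : ∀ j : Fin (N + 1 + 1), y k + psum (fun m : Fin (N + 1) =>
        if (m : ℕ) < N - k % N then t (⟨(k / N) % (N + 1), Nat.mod_lt _ hn0⟩ + c)
        else t ((⟨(k / N) % (N + 1), Nat.mod_lt _ hn0⟩ + c) + ⟨1, by omega⟩)) j * (h / N)
        = y (k + j) := by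
      intro j
      rw [psum_eq_range _ (fun l => u ((k + l) / N))]
      · simp only [y, Finset.sum_range_add]
        ring
      · intro l
        have hl := l.2
        have hkl : k + (l : ℕ) = N * (k / N) + (k % N + l) := by omega
        rw [hkl, Nat.mul_add_div hN]
        split_ifs with hlt
        · rw [Nat.div_eq_of_lt (by omega : k % N + (l : ℕ) < N)]; rfl
        · have : (k % N + (l : ℕ)) / N = 1 := by
            apply Nat.div_eq_of_lt_le <;> omega
          rw [this, husucc]
    simp only [hps] at key
    exact key (hyI _ (by simpa using hk))
  have e : (fun j => x + psum (fun i => t (i + c)) j * h)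
      = y ∘ (fun j : Fin (N + 1 + 1) => N * (j : ℕ)) := by
    funext j; exact hyN j
  rw [e]
  refine Phi_of_consecutive ω I hω f y hy (N * (N + 1)) hyI hcons _ _ ?_ ?_ rfl
  · intro a b hab
    exact Nat.mul_lt_mul_of_pos_left hab hN
  · simp
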